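/- Let L > 0 and suppose (u1, u2, v1, v2) are smooth, L-periodic in x, and satisfy the four-component system: ∂ₜm1 + n2 g1 g2 + m1(f2 g2 + 2 f1 g1) = 0, ∂ₜm2 − n1 g1 g2 − m2(f1 g1 + 2 f2 g2) = 0, ∂ₜn1 − m2 f1 f2 − n1(f2 g2 + 2 f1 g1) = 0, ∂ₜn2 + m1 f1 f2 + n2(f1 g1 + 2 f2 g2) = 0. Then the quantity ρ̄₂(t) = (1/2) ∫₀ᴸ (m1 + n2)(f1 + g2)(x, t) dx is independent of t. -/

import Mathlib

/-!
The density `ρ = (m1 + n2)(f1 + g2)` satisfies a local conservation law `∂ₜρ = ∂ₓF` with an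
explicit `x`-periodic flux `F`; the divergence theorem on `[0, L] × [t1, t2]` then gives the claim.

Write `a = f2 + g1` and `q = f1 + g2`. The definitions give
`∂ₓf1 = n1 - g2`, `∂ₓg2 = m2 - f1`, `∂ₓf2 = g1 - n2`, `∂ₓg1 = f2 - m1`,
so `m1 + n2 = a - ∂ₓa` and `m2 + n1 = q + ∂ₓq`. With `b = ∂ₜq`,
`(m1 + n2) b = (a - ∂ₓa) b = a (b + ∂ₓb) - ∂ₓ(a b) = a ∂ₜ(m2 + n1) - ∂ₓ(a b)`,
because partial derivatives commute. Hence `∂ₜρ + ∂ₓ(a b) = q ∂ₜ(m1 + n2) + a ∂ₜ(m2 + n1)`.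
Inserting the system, the right-hand side equals `∂ₓ(a q (f1 g1 + f2 g2))`, so
`F = a q (f1 g1 + f2 g2) - a ∂ₜq`.
-/

/-- Partial derivative with respect to the first (space) variable. -/
noncomputable def pX (f : ℝ × ℝ → ℝ) : ℝ × ℝ → ℝ :=
  fun p => deriv (fun x => f (x, p.2)) p.1

/-- Partial derivative with respect to the second (time) variable. -/
noncomputable def pT (f : ℝ × ℝ → ℝ) : ℝ × ℝ → ℝ :=
  fun p => deriv (fun t => f (p.1, t)) p.2

open scoped ContDiff

/-! ### Calculus of the partial derivatives -/

theorem pX_eq_fderiv {f : ℝ × ℝ → ℝ} (hf : ContDiff ℝ ∞ f) (p : ℝ × ℝ) :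
    pX f p = fderiv ℝ f p (1, 0) := by
  have h1 : HasFDerivAt f (fderiv ℝ f p) (p.1, p.2) :=
    (hf.differentiable (by simp) p).hasFDerivAt
  have h2 : HasDerivAt (fun x : ℝ => (x, p.2)) ((1 : ℝ), (0 : ℝ)) p.1 :=
    (hasDerivAt_id p.1).prodMk (hasDerivAt_const p.1 p.2)
  exact (h1.comp_hasDerivAt p.1 h2).deriv

theorem pT_eq_fderiv {f : ℝ × ℝ → ℝ} (hf : ContDiff ℝ ∞ f) (p : ℝ × ℝ) :
    pT f p = fderiv ℝ f p (0, 1) := by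
  have h1 : HasFDerivAt f (fderiv ℝ f p) (p.1, p.2) :=
    (hf.differentiable (by simp) p).hasFDerivAt
  have h2 : HasDerivAt (fun t : ℝ => (p.1, t)) ((0 : ℝ), (1 : ℝ)) p.2 :=
    (hasDerivAt_const p.2 p.1).prodMk (hasDerivAt_id p.2)
  exact (h1.comp_hasDerivAt p.2 h2).deriv

theorem contDiff_pX {f : ℝ × ℝ → ℝ} (hf : ContDiff ℝ ∞ f) : ContDiff ℝ ∞ (pX f) := by
  rw [funext (pX_eq_fderiv hf)]
  exact (hf.fderiv_right (by simp)).clm_apply contDiff_const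

theorem contDiff_pT {f : ℝ × ℝ → ℝ} (hf : ContDiff ℝ ∞ f) : ContDiff ℝ ∞ (pT f) := by
  rw [funext (pT_eq_fderiv hf)]
  exact (hf.fderiv_right (by simp)).clm_apply contDiff_const

theorem pT_pX_comm {f : ℝ × ℝ → ℝ} (hf : ContDiff ℝ ∞ f) (p : ℝ × ℝ) :
    pT (pX f) p = pX (pT f) p := by
  have hd : DifferentiableAt ℝ (fderiv ℝ f) p :=
    (hf.fderiv_right (m := ∞) (by simp)).differentiable (by simp) p
  have hs : IsSymmSndFDerivAt ℝ f p := hf.contDiffAt.isSymmSndFDerivAt (by simpa using WithTop.coe_le_coe.2 (le_top : (2 : ℕ∞) ≤ ⊤))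
  rw [pT_eq_fderiv (contDiff_pX hf), pX_eq_fderiv (contDiff_pT hf),
    funext (pX_eq_fderiv hf), funext (pT_eq_fderiv hf),
    fderiv_clm_apply hd (by fun_prop), fderiv_clm_apply hd (by fun_prop)]
  simpa using hs (0, 1) (1, 0)

theorem pX_add {f g : ℝ × ℝ → ℝ} (hf : ContDiff ℝ ∞ f) (hg : ContDiff ℝ ∞ g) (p : ℝ × ℝ) :
    pX (fun p => f p + g p) p = pX f p + pX g p := by
  have h1 := hf.differentiable (by simp) p
  have h2 := hg.differentiable (by simp) p
  rw [pX_eq_fderiv (hf.add hg), pX_eq_fderiv hf, pX_eq_fderiv hg, fderiv_fun_add h1 h2]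
  simp

theorem pX_sub {f g : ℝ × ℝ → ℝ} (hf : ContDiff ℝ ∞ f) (hg : ContDiff ℝ ∞ g) (p : ℝ × ℝ) :
    pX (fun p => f p - g p) p = pX f p - pX g p := by
  have h1 := hf.differentiable (by simp) p
  have h2 := hg.differentiable (by simp) p
  rw [pX_eq_fderiv (hf.sub hg), pX_eq_fderiv hf, pX_eq_fderiv hg, fderiv_fun_sub h1 h2]
  simp

theorem pX_mul {f g : ℝ × ℝ → ℝ} (hf : ContDiff ℝ ∞ f) (hg : ContDiff ℝ ∞ g) (p : ℝ × ℝ) :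
    pX (fun p => f p * g p) p = f p * pX g p + g p * pX f p := by
  have h1 := hf.differentiable (by simp) p
  have h2 := hg.differentiable (by simp) p
  rw [pX_eq_fderiv (hf.mul hg), pX_eq_fderiv hf, pX_eq_fderiv hg, fderiv_fun_mul h1 h2]
  simp

theorem pT_add {f g : ℝ × ℝ → ℝ} (hf : ContDiff ℝ ∞ f) (hg : ContDiff ℝ ∞ g) (p : ℝ × ℝ) :
    pT (fun p => f p + g p) p = pT f p + pT g p := by
  have h1 := hf.differentiable (by simp) p
  have h2 := hg.differentiable (by simp) p
  rw [pT_eq_fderiv (hf.add hg), pT_eq_fderiv hf, pT_eq_fderiv hg, fderiv_fun_add h1 h2]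
  simp

theorem pT_mul {f g : ℝ × ℝ → ℝ} (hf : ContDiff ℝ ∞ f) (hg : ContDiff ℝ ∞ g) (p : ℝ × ℝ) :
    pT (fun p => f p * g p) p = f p * pT g p + g p * pT f p := by
  have h1 := hf.differentiable (by simp) p
  have h2 := hg.differentiable (by simp) p
  rw [pT_eq_fderiv (hf.mul hg), pT_eq_fderiv hf, pT_eq_fderiv hg, fderiv_fun_mul h1 h2]
  simp

theorem pX_periodic {L : ℝ} {f : ℝ × ℝ → ℝ} (h : ∀ x t, f (x + L, t) = f (x, t)) (x t : ℝ) :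
    pX f (x + L, t) = pX f (x, t) := by
  have := deriv_comp_add_const (fun y => f (y, t)) L x
  simp only [h] at this
  exact this.symm

theorem pT_periodic {L : ℝ} {f : ℝ × ℝ → ℝ} (h : ∀ x t, f (x + L, t) = f (x, t)) (x t : ℝ) :
    pT f (x + L, t) = pT f (x, t) := by
  simp only [pT, h]

/-! ### Conservation laws -/

/-- A density with an `x`-periodic flux has a conserved integral over one period. The divergence
of `(-F, ρ)` vanishes, and the two vertical sides of `[0, L] × [t1, t2]` cancel by periodicity. -/
theorem integral_eq_of_conservation {L : ℝ} {ρ F : ℝ × ℝ → ℝ}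
    (hρ : ContDiff ℝ ∞ ρ) (hF : ContDiff ℝ ∞ F)
    (hper : ∀ x t, F (x + L, t) = F (x, t)) (h : ∀ p, pT ρ p = pX F p) (t1 t2 : ℝ) :
    ∫ x in (0:ℝ)..L, ρ (x, t1) = ∫ x in (0:ℝ)..L, ρ (x, t2) := by
  have hdiv : ∀ p, (-fderiv ℝ F p) (1, 0) + fderiv ℝ ρ p (0, 1) = 0 := by
    intro p
    have := h p
    rw [pT_eq_fderiv hρ, pX_eq_fderiv hF] at this
    simp [this]
  have key := MeasureTheory.integral2_divergence_prod_of_hasFDerivAt_off_countable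
    (fun p => -F p) ρ (fun p => -fderiv ℝ F p) (fderiv ℝ ρ) 0 t1 L t2 ∅ Set.countable_empty
    hF.continuous.neg.continuousOn hρ.continuous.continuousOn
    (fun p _ => ((hF.differentiable (by simp) p).hasFDerivAt).neg)
    (fun p _ => (hρ.differentiable (by simp) p).hasFDerivAt)
    (by simp only [hdiv]; exact MeasureTheory.integrableOn_zero)
  have hside : ∀ t, F (L, t) = F (0, t) := fun t => by simpa using hper 0 t
  simp only [hdiv, hside, intervalIntegral.integral_zero] at key
  linarith

theorem stmt_17
    (L : ℝ) (hL : 0 < L)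
    (u1 u2 v1 v2 : ℝ × ℝ → ℝ)
    (hu1 : ContDiff ℝ (⊤ : ℕ∞) u1) (hu2 : ContDiff ℝ (⊤ : ℕ∞) u2)
    (hv1 : ContDiff ℝ (⊤ : ℕ∞) v1) (hv2 : ContDiff ℝ (⊤ : ℕ∞) v2)
    (hperu1 : ∀ x t : ℝ, u1 (x + L, t) = u1 (x, t))
    (hperu2 : ∀ x t : ℝ, u2 (x + L, t) = u2 (x, t))
    (hperv1 : ∀ x t : ℝ, v1 (x + L, t) = v1 (x, t))
    (hperv2 : ∀ x t : ℝ, v2 (x + L, t) = v2 (x, t))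
    (m1 m2 n1 n2 f1 f2 g1 g2 : ℝ × ℝ → ℝ)
    (hm1 : m1 = fun p => u1 p - pX (pX u1) p)
    (hm2 : m2 = fun p => u2 p - pX (pX u2) p)
    (hn1 : n1 = fun p => v1 p - pX (pX v1) p)
    (hn2 : n2 = fun p => v2 p - pX (pX v2) p)
    (hf1 : f1 = fun p => u2 p - pX v1 p)
    (hf2 : f2 = fun p => u1 p + pX v2 p)
    (hg1 : g1 = fun p => v2 p + pX u1 p)
    (hg2 : g2 = fun p => v1 p - pX u2 p)
    (hsys : ∀ p : ℝ × ℝ,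
        pT m1 p + n2 p * g1 p * g2 p + m1 p * (f2 p * g2 p + 2 * f1 p * g1 p) = 0 ∧
        pT m2 p - n1 p * g1 p * g2 p - m2 p * (f1 p * g1 p + 2 * f2 p * g2 p) = 0 ∧
        pT n1 p - m2 p * f1 p * f2 p - n1 p * (f2 p * g2 p + 2 * f1 p * g1 p) = 0 ∧
        pT n2 p + m1 p * f1 p * f2 p + n2 p * (f1 p * g1 p + 2 * f2 p * g2 p) = 0) :
    ∀ t1 t2 : ℝ,
      ((1 : ℝ) / 2) * (∫ x in (0:ℝ)..L,
          (m1 (x, t1) + n2 (x, t1)) * (f1 (x, t1) + g2 (x, t1)))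
        = ((1 : ℝ) / 2) * ∫ x in (0:ℝ)..L,
            (m1 (x, t2) + n2 (x, t2)) * (f1 (x, t2) + g2 (x, t2)) := by
  intro t1 t2
  have su1 := contDiff_pX hu1
  have su2 := contDiff_pX hu2
  have sv1 := contDiff_pX hv1
  have sv2 := contDiff_pX hv2
  have sm1 : ContDiff ℝ ∞ m1 := hm1 ▸ hu1.sub (contDiff_pX su1)
  have sm2 : ContDiff ℝ ∞ m2 := hm2 ▸ hu2.sub (contDiff_pX su2)
  have sn1 : ContDiff ℝ ∞ n1 := hn1 ▸ hv1.sub (contDiff_pX sv1)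
  have sn2 : ContDiff ℝ ∞ n2 := hn2 ▸ hv2.sub (contDiff_pX sv2)
  have sf1 : ContDiff ℝ ∞ f1 := hf1 ▸ hu2.sub sv1
  have sf2 : ContDiff ℝ ∞ f2 := hf2 ▸ hu1.add sv2
  have sg1 : ContDiff ℝ ∞ g1 := hg1 ▸ hv2.add su1
  have sg2 : ContDiff ℝ ∞ g2 := hg2 ▸ hv1.sub su2
  have df1 : ∀ p, pX f1 p = n1 p - g2 p := fun p => by
    rw [hf1, pX_sub hu2 sv1, hn1, hg2]; ring
  have dg2 : ∀ p, pX g2 p = m2 p - f1 p := fun p => by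
    rw [hg2, pX_sub hv1 su2, hm2, hf1]; ring
  have df2 : ∀ p, pX f2 p = g1 p - n2 p := fun p => by
    rw [hf2, pX_add hu1 sv2, hn2, hg1]; ring
  have dg1 : ∀ p, pX g1 p = f2 p - m1 p := fun p => by
    rw [hg1, pX_add hv2 su1, hm1, hf2]; ring
  have pf1 : ∀ x t, f1 (x + L, t) = f1 (x, t) := fun x t => by
    simp only [hf1, hperu2, pX_periodic hperv1]
  have pf2 : ∀ x t, f2 (x + L, t) = f2 (x, t) := fun x t => by
    simp only [hf2, hperu1, pX_periodic hperv2]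
  have pg1 : ∀ x t, g1 (x + L, t) = g1 (x, t) := fun x t => by
    simp only [hg1, hperv2, pX_periodic hperu1]
  have pg2 : ∀ x t, g2 (x + L, t) = g2 (x, t) := fun x t => by
    simp only [hg2, hperv1, pX_periodic hperu2]
  clear hm1 hm2 hn1 hn2 hf1 hf2 hg1 hg2
  have sq : ContDiff ℝ ∞ (fun p => f1 p + g2 p) := sf1.add sg2
  have sa : ContDiff ℝ ∞ (fun p => f2 p + g1 p) := sf2.add sg1
  have sb := contDiff_pT sq
  have pq : ∀ x t, (fun p => f1 p + g2 p) (x + L, t) = (fun p => f1 p + g2 p) (x, t) :=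
    fun x t => by simp only [pf1, pg2]
  have s1 : ContDiff ℝ ∞ (fun p => f1 p * g1 p) := sf1.mul sg1
  have s2 : ContDiff ℝ ∞ (fun p => f2 p * g2 p) := sf2.mul sg2
  have s12 : ContDiff ℝ ∞ (fun p => f1 p * g1 p + f2 p * g2 p) := s1.add s2
  have saq : ContDiff ℝ ∞ (fun p => (f2 p + g1 p) * (f1 p + g2 p)) := sa.mul sq
  have sH : ContDiff ℝ ∞
      (fun p => (f2 p + g1 p) * (f1 p + g2 p) * (f1 p * g1 p + f2 p * g2 p)) := saq.mul s12
  have sab : ContDiff ℝ ∞ (fun p => (f2 p + g1 p) * pT (fun p => f1 p + g2 p) p) := sa.mul sb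
  have smn : ContDiff ℝ ∞ (fun p => m1 p + n2 p) := sm1.add sn2
  -- The time derivative of `m2 + n1 = q + ∂ₓq`, with the partial derivatives interchanged.
  have hb : ∀ p, pT m2 p + pT n1 p
      = pT (fun p => f1 p + g2 p) p + pX (pT (fun p => f1 p + g2 p)) p := by
    intro p
    rw [← pT_pX_comm sq, ← pT_add sq (contDiff_pX sq), ← pT_add sm2 sn1]
    congr 1
    funext p
    rw [pX_add sf1 sg2, df1, dg2]
    ring
  congr 1
  refine integral_eq_of_conservation
    (ρ := fun p => (m1 p + n2 p) * (f1 p + g2 p))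
    (F := fun p => (f2 p + g1 p) * (f1 p + g2 p) * (f1 p * g1 p + f2 p * g2 p)
      - (f2 p + g1 p) * pT (fun p => f1 p + g2 p) p)
    (smn.mul sq) (sH.sub sab) ?_ ?_ t1 t2
  · intro x t
    simp only [pT_periodic (f := fun p => f1 p + g2 p) pq, pf1, pf2, pg1, pg2]
  · intro p
    obtain ⟨e1, e2, e3, e4⟩ := hsys p
    rw [pT_mul smn sq, pX_sub sH sab, pX_mul sa sb, pX_mul saq s12, pX_mul sa sq, pX_add s1 s2,
      pX_mul sf1 sg1, pX_mul sf2 sg2, pX_add sf2 sg1, pX_add sf1 sg2, pT_add sm1 sn2,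
      df1, df2, dg1, dg2]
    linear_combination (f1 p + g2 p) * (e1 + e4) + (f2 p + g1 p) * (e2 + e3)
      - (f2 p + g1 p) * hb p
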